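/- (Laurie–Longstaff) Let L be a completely distributive commutative subspace lattice on a complex separable Hilbert space H, and let R_L denote the linear span of the rank one operators belonging to Alg L. Then R_L is dense in Alg L in the weak operator topology. -/

import Mathlib

open scoped InnerProductSpace

noncomputable section

/-- The join (closed linear span) of a family of subspaces of a Hilbert space. -/
def closedJoin {H : Type*} [NormedAddCommGroup H] [InnerProductSpace ℂ H]
    (S : Set (Submodule ℂ H)) : Submodule ℂ H :=
  (sSup S).topologicalClosure

/-- A subspace lattice on `H`: a family of closed subspaces containing `{0}` and `H`,
closed under arbitrary intersections and arbitrary closed linear spans. -/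
structure IsSubspaceLattice {H : Type*} [NormedAddCommGroup H] [InnerProductSpace ℂ H]
    (L : Set (Submodule ℂ H)) : Prop where
  isClosed : ∀ E ∈ L, IsClosed (E : Set H)
  bot_mem : ⊥ ∈ L
  top_mem : ⊤ ∈ L
  sInf_mem : ∀ S : Set (Submodule ℂ H), S ⊆ L → sInf S ∈ L
  join_mem : ∀ S : Set (Submodule ℂ H), S ⊆ L → closedJoin S ∈ L

/-- `M₋`: the join of all members of `L` that do not contain `M`. -/
def minus {H : Type*} [NormedAddCommGroup H] [InnerProductSpace ℂ H]
    (L : Set (Submodule ℂ H)) (M : Submodule ℂ H) : Submodule ℂ H :=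
  closedJoin {E | E ∈ L ∧ ¬ M ≤ E}

open Classical in
/-- The orthogonal projection of `H` onto a closed subspace `E`, as an operator on `H`
(junk value `0` if `E` is not closed). -/
def projOf {H : Type*} [NormedAddCommGroup H] [InnerProductSpace ℂ H] [CompleteSpace H]
    (E : Submodule ℂ H) : H →L[ℂ] H :=
  if h : IsClosed (E : Set H) then
    haveI : CompleteSpace E := h.completeSpace_coe
    E.subtypeL.comp (E.orthogonalProjectionOnto)
  else 0

/-- A commutative subspace lattice: the orthogonal projections onto members commute. -/
structure IsCSL {H : Type*} [NormedAddCommGroup H] [InnerProductSpace ℂ H] [CompleteSpace H]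
    (L : Set (Submodule ℂ H)) extends IsSubspaceLattice L : Prop where
  commutes : ∀ E ∈ L, ∀ F ∈ L, projOf E * projOf F = projOf F * projOf E

/-- Complete distributivity of the lattice `L` (meets are intersections, joins are
closed linear spans). -/
def IsCompletelyDistributive {H : Type*} [NormedAddCommGroup H] [InnerProductSpace ℂ H]
    (L : Set (Submodule ℂ H)) : Prop :=
  ∀ (I : Type) (J : I → Type) (E : (i : I) → J i → Submodule ℂ H),
    (∀ i j, E i j ∈ L) →
     ((⨅ i, closedJoin (Set.range (E i)))
        = closedJoin (Set.range fun φ : (∀ i, J i) => ⨅ i, E i (φ i)))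
    ∧ (closedJoin (Set.range fun i => ⨅ j, E i j)
        = ⨅ φ : (∀ i, J i), closedJoin (Set.range fun i => E i (φ i)))

/-- `Alg L`: all bounded operators leaving every member of `L` invariant. -/
def algL {H : Type*} [NormedAddCommGroup H] [InnerProductSpace ℂ H]
    (L : Set (Submodule ℂ H)) : Set (H →L[ℂ] H) :=
  {T | ∀ E ∈ L, ∀ x ∈ E, T x ∈ E}

/-- The rank one operator `x ⊗ f* : h ↦ ⟨h, f⟩ x`. -/
def rankOne {H : Type*} [NormedAddCommGroup H] [InnerProductSpace ℂ H]
    (x f : H) : H →L[ℂ] H :=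
  (innerSL ℂ f).smulRight x

/-- The rank of a bounded operator: the dimension of its range. -/
def opRank {H : Type*} [NormedAddCommGroup H] [InnerProductSpace ℂ H]
    (T : H →L[ℂ] H) : Cardinal :=
  Module.rank ℂ (LinearMap.range (T : H →ₗ[ℂ] H))

/-- `Φ` is a linear map of `Alg L` into itself. -/
structure IsLinearOnAlg {H : Type*} [NormedAddCommGroup H] [InnerProductSpace ℂ H]
    (L : Set (Submodule ℂ H)) (Φ : (H →L[ℂ] H) → (H →L[ℂ] H)) : Prop where
  maps : ∀ A ∈ algL L, Φ A ∈ algL L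
  map_add : ∀ A ∈ algL L, ∀ B ∈ algL L, Φ (A + B) = Φ A + Φ B
  map_smul : ∀ (c : ℂ), ∀ A ∈ algL L, Φ (c • A) = c • Φ A

/-- `Φ` preserves the rank of every finite rank operator in `Alg L`. -/
def RankPreserving {H : Type*} [NormedAddCommGroup H] [InnerProductSpace ℂ H]
    (L : Set (Submodule ℂ H)) (Φ : (H →L[ℂ] H) → (H →L[ℂ] H)) : Prop :=
  ∀ A ∈ algL L, opRank A < Cardinal.aleph0 → opRank (Φ A) = opRank A

/-- `a ∼ b`: (nonzero) vectors `a` and `b` are linearly dependent. -/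
def Dep {H : Type*} [NormedAddCommGroup H] [InnerProductSpace ℂ H] (a b : H) : Prop :=
  ∃ c : ℂ, c ≠ 0 ∧ b = c • a

/-- `N` is consistent with respect to `Φ`. -/
def Consistent {H : Type*} [NormedAddCommGroup H] [InnerProductSpace ℂ H]
    (L : Set (Submodule ℂ H)) (Φ : (H →L[ℂ] H) → (H →L[ℂ] H))
    (N : Submodule ℂ H) : Prop :=
  N ≠ ⊥ ∧ minus L N ≠ ⊤ ∧
    ∃ (U : N →ₗ[ℂ] H) (V : ((minus L N)ᗮ : Submodule ℂ H) →ₗ[ℂ] H),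
      ∀ (x : N) (f : ((minus L N)ᗮ : Submodule ℂ H)),
        Φ (rankOne (x : H) (f : H)) = rankOne (U x) (V f)

/-- `N` is twisted with respect to `Φ`. -/
def Twisted {H : Type*} [NormedAddCommGroup H] [InnerProductSpace ℂ H]
    (L : Set (Submodule ℂ H)) (Φ : (H →L[ℂ] H) → (H →L[ℂ] H))
    (N : Submodule ℂ H) : Prop :=
  N ≠ ⊥ ∧ minus L N ≠ ⊤ ∧
    ∃ (U : ((minus L N)ᗮ : Submodule ℂ H) →ₗ⋆[ℂ] H) (V : N →ₗ⋆[ℂ] H),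
      ∀ (x : N) (f : ((minus L N)ᗮ : Submodule ℂ H)),
        Φ (rankOne (x : H) (f : H)) = rankOne (U f) (V x)

/-- `N` is isolated: `dim N = 1` and `N^⊥ ∈ L`. -/
def Isolated {H : Type*} [NormedAddCommGroup H] [InnerProductSpace ℂ H]
    (L : Set (Submodule ℂ H)) (N : Submodule ℂ H) : Prop :=
  Module.rank ℂ N = 1 ∧ Nᗮ ∈ L

/-- The family `F` of all `N ∈ L` with `N ≠ {0}` and `N₋ ≠ H`. -/
def famF {H : Type*} [NormedAddCommGroup H] [InnerProductSpace ℂ H]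
    (L : Set (Submodule ℂ H)) : Set (Submodule ℂ H) :=
  {N | N ∈ L ∧ N ≠ ⊥ ∧ minus L N ≠ ⊤}

/-- Subspaces are comparable if one contains the other. -/
def Comparable' {H : Type*} [NormedAddCommGroup H] [InnerProductSpace ℂ H]
    (M N : Submodule ℂ H) : Prop :=
  M ≤ N ∨ N ≤ M

/-- There is a chain in `F` from `M` to `N`. -/
def ChainConn {H : Type*} [NormedAddCommGroup H] [InnerProductSpace ℂ H]
    (L : Set (Submodule ℂ H)) (M N : Submodule ℂ H) : Prop :=
  ∃ (n : ℕ) (c : Fin (n + 1) → Submodule ℂ H),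
    (∀ k, c k ∈ famF L) ∧ c 0 = M ∧ c (Fin.last n) = N ∧
      ∀ k : Fin n, Comparable' (c k.castSucc) (c k.succ)

/-- `𝔊_N`: all members of `F` that can be connected to `N` by a chain. -/
def GSet {H : Type*} [NormedAddCommGroup H] [InnerProductSpace ℂ H]
    (L : Set (Submodule ℂ H)) (N : Submodule ℂ H) : Set (Submodule ℂ H) :=
  {M | M ∈ famF L ∧ ChainConn L N M}

end

open Filter Topology

section LLaux

variable {H : Type*} [NormedAddCommGroup H] [InnerProductSpace ℂ H]

theorem ll_small [TopologicalSpace.SeparableSpace H] (L : Set (Submodule ℂ H))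
    (hL : ∀ E ∈ L, IsClosed (E : Set H)) : Small.{0} L := by
  have : SecondCountableTopology H := UniformSpace.secondCountable_of_separable H
  have hc : Countable (TopologicalSpace.countableBasis H) :=
    (TopologicalSpace.countable_countableBasis H).to_subtype
  let f : L → Set (TopologicalSpace.countableBasis H) :=
    fun K => {b | (b : Set H) ⊆ ((K : Submodule ℂ H) : Set H)ᶜ}
  have hf : Function.Injective f := by
    intro K M h
    have key : ∀ K : L, ((K : Submodule ℂ H) : Set H)ᶜ = ⋃ b ∈ f K, (b : Set H) := by
      intro K
      ext x
      simp only [Set.mem_iUnion]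
      constructor
      · intro hx
        obtain ⟨b, hb, hxb, hbs⟩ :=
          (TopologicalSpace.isBasis_countableBasis H).exists_subset_of_mem_open hx
            (hL K K.2).isOpen_compl
        exact ⟨⟨b, hb⟩, hbs, hxb⟩
      · rintro ⟨b, hb, hx⟩
        exact hb hx
    apply Subtype.ext
    apply SetLike.coe_injective
    have h1 := key K
    rw [h, ← key M] at h1
    exact compl_injective h1
  exact small_of_injective hf

theorem ll_le_closedJoin {S : Set (Submodule ℂ H)} {E : Submodule ℂ H} (h : E ∈ S) :
    E ≤ closedJoin S :=
  (le_sSup h).trans (Submodule.le_topologicalClosure _)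

theorem ll_closedJoin_le {S : Set (Submodule ℂ H)} {E : Submodule ℂ H}
    (hE : IsClosed (E : Set H)) (h : ∀ K ∈ S, K ≤ E) : closedJoin S ≤ E :=
  Submodule.topologicalClosure_minimal _ (sSup_le h) hE

theorem ll_minus_mem {L : Set (Submodule ℂ H)} (hL : IsSubspaceLattice L) (N : Submodule ℂ H) :
    minus L N ∈ L :=
  hL.join_mem _ (fun _ h => h.1)

/-- Every `E ∈ L` is the meet of the `N₋` with `N ∈ L` not contained in `E`. -/
theorem ll_cd [TopologicalSpace.SeparableSpace H] {L : Set (Submodule ℂ H)}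
    (hL : IsSubspaceLattice L) (hcd : IsCompletelyDistributive L) {E : Submodule ℂ H}
    (hE : E ∈ L) (x : H) (hx : ∀ N ∈ L, ¬ N ≤ E → x ∈ minus L N) : x ∈ E := by
  have hs : Small.{0} L := ll_small L hL.isClosed
  let e : Shrink.{0} L → Submodule ℂ H := fun i => ((equivShrink L).symm i : Submodule ℂ H)
  have he : ∀ i, e i ∈ L := fun i => ((equivShrink L).symm i).2
  have hes : ∀ K ∈ L, ∃ i, e i = K := fun K hK => ⟨equivShrink L ⟨K, hK⟩, by simp [e]⟩
  let I := {i : Shrink.{0} L // ¬ e i ≤ E}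
  let J : I → Type := fun i => {j : Shrink.{0} L // ¬ e i.1 ≤ e j}
  have h := (hcd I J (fun _ j => e j.1) (fun _ j => he _)).1
  have h1 : x ∈ ⨅ i : I, closedJoin (Set.range (fun j : J i => e j.1)) := by
    rw [Submodule.mem_iInf]
    intro i
    have h2 := hx (e i.1) (he _) i.2
    have : {K | K ∈ L ∧ ¬ e i.1 ≤ K} = Set.range (fun j : J i => e j.1) := by
      ext K
      constructor
      · rintro ⟨hK, hn⟩
        obtain ⟨j, rfl⟩ := hes K hK
        exact ⟨⟨j, hn⟩, rfl⟩
      · rintro ⟨j, rfl⟩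
        exact ⟨he _, j.2⟩
    rwa [minus, this] at h2
  rw [h] at h1
  refine ll_closedJoin_le (hL.isClosed E hE) ?_ h1
  rintro _ ⟨φ, rfl⟩
  by_contra hn
  have hG : (⨅ i : I, e (φ i).1) ∈ L := hL.sInf_mem _ (by rintro _ ⟨i, rfl⟩; exact he _)
  obtain ⟨g, hg⟩ := hes _ hG
  have hg' : ¬ e g ≤ E := by rw [hg]; exact hn
  have := (φ ⟨g, hg'⟩).2
  apply this
  exact hg.le.trans (iInf_le (fun i : I => e (φ i).1) ⟨g, hg'⟩)

theorem ll_rankOne_mem {L : Set (Submodule ℂ H)} {N : Submodule ℂ H}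
    {x f : H} (hx : x ∈ N) (hf : f ∈ (minus L N)ᗮ) : rankOne x f ∈ algL L := by
  intro E hE h hh
  by_cases hN : N ≤ E
  · exact E.smul_mem _ (hN hx)
  · have : h ∈ minus L N := ll_le_closedJoin (S := {E | E ∈ L ∧ ¬ N ≤ E}) ⟨hE, hN⟩ hh
    have h0 : inner ℂ f h = 0 := Submodule.inner_left_of_mem_orthogonal this hf
    simp [rankOne, h0]

/-- Reduction of weak operator density to a trace statement. -/
theorem ll_reduce [CompleteSpace H] {L : Set (Submodule ℂ H)} (hL : IsSubspaceLattice L)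
    (key : ∀ (s : Finset (H × (StrongDual ℂ H))) (x y : H × (StrongDual ℂ H) → H),
      (∀ N ∈ L, ∀ h ∈ N, ∑ i ∈ s, inner ℂ (x i) h • y i ∈ minus L N) →
      ∑ i ∈ s, inner ℂ (x i) (y i) = 0)
    (A : H →L[ℂ] H) (hA : A ∈ algL L) :
      ContinuousLinearMapWOT.ofCLM (σ := RingHom.id ℂ) (E := H) (F := H) A ∈
        closure (ContinuousLinearMapWOT.ofCLM (σ := RingHom.id ℂ) (E := H) (F := H) ''
          (Submodule.span ℂ
            {T : H →L[ℂ] H | T ∈ algL L ∧ ∃ x f : H, x ≠ 0 ∧ f ≠ 0 ∧ T = rankOne x f} :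
              Set (H →L[ℂ] H))) := by
  set W := Submodule.span ℂ
            {T : H →L[ℂ] H | T ∈ algL L ∧ ∃ x f : H, x ≠ 0 ∧ f ≠ 0 ∧ T = rankOne x f} with hW
  have hWr : ∀ N ∈ L, ∀ x ∈ N, ∀ f ∈ (minus L N)ᗮ, rankOne x f ∈ W := by
    intro N hN x hx f hf
    by_cases hx0 : x = 0
    · have : rankOne x f = 0 := by ext; simp [rankOne, hx0]
      rw [this]; exact W.zero_mem
    by_cases hf0 : f = 0
    · have : rankOne x f = 0 := by ext; simp [rankOne, hf0]
      rw [this]; exact W.zero_mem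
    exact Submodule.subset_span ⟨ll_rankOne_mem hx hf, x, f, hx0, hf0, rfl⟩
  have main : ∀ s : Finset (H × (StrongDual ℂ H)), ∃ T ∈ W, ∀ p ∈ s, p.2 (T p.1) = p.2 (A p.1) := by
    intro s
    let Φ : (H →L[ℂ] H) →ₗ[ℂ] (s → ℂ) :=
      { toFun := fun T p => p.1.2 (T p.1.1)
        map_add' := by intro a b; ext; simp
        map_smul' := by intro a b; ext; simp }
    suffices hs : Φ A ∈ W.map Φ by
      obtain ⟨T, hT, hTA⟩ := hs
      exact ⟨T, hT, fun p hp => congrFun hTA ⟨p, hp⟩⟩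
    by_contra hn
    obtain ⟨g, hg, hker⟩ := Submodule.exists_le_ker_of_notMem hn
    classical
    let c : H × (StrongDual ℂ H) → ℂ := fun p =>
      if hp : p ∈ s then g (Pi.single ⟨p, hp⟩ 1) else 0
    have hgΦ : ∀ T, g (Φ T) = ∑ p ∈ s, c p * p.2 (T p.1) := by
      intro T
      rw [LinearMap.pi_apply_eq_sum_univ g (Φ T), ← Finset.sum_coe_sort s]
      refine Finset.sum_congr rfl fun p _ => ?_
      have : (fun j => if p = j then (1:ℂ) else 0) = Pi.single p 1 := by
        ext j; simp [Pi.single_apply, eq_comm]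
      simp only [c, p.2, dif_pos, smul_eq_mul, mul_comm, this]
      rfl
    apply hg
    rw [hgΦ]
    let k : H × (StrongDual ℂ H) → H := fun p => (InnerProductSpace.toDual ℂ H).symm p.2
    have hk : ∀ p h, p.2 h = inner ℂ (k p) h := by intro p h; simp [k]
    have := key s k (fun p => A (c p • p.1)) ?_
    · rw [← this]
      refine Finset.sum_congr rfl fun p _ => ?_
      rw [map_smul, inner_smul_right, hk]
    · intro N hN h hh
      have hcl := hL.isClosed _ (ll_minus_mem hL N)
      have h1 : ∑ p ∈ s, inner ℂ (k p) h • (c p • p.1) ∈ minus L N := by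
        have : CompleteSpace (minus L N) := hcl.completeSpace_coe
        rw [← Submodule.orthogonal_orthogonal (minus L N), Submodule.mem_orthogonal]
        intro f hf
        have h2 : g (Φ (rankOne h f)) = 0 := hker ⟨_, hWr N hN h hh f hf, rfl⟩
        rw [hgΦ] at h2
        rw [inner_sum, ← h2]
        refine Finset.sum_congr rfl fun p _ => ?_
        rw [hk, rankOne]
        simp [inner_smul_right]
        ring
      have h3 := hA _ (ll_minus_mem hL N) _ h1
      rw [map_sum] at h3
      simpa only [map_smul] using h3
  rw [(ContinuousLinearMapWOT.isInducing_inducingFn (σ := RingHom.id ℂ) (E := H)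
    (F := H)).closure_eq_preimage_closure_image, Set.mem_preimage, mem_closure_iff]
  intro o ho hAo
  rw [isOpen_pi_iff] at ho
  obtain ⟨s, u, hu, hsu⟩ := ho _ hAo
  obtain ⟨T, hT, hTs⟩ := main s
  refine ⟨_, hsu ?_, ⟨_, ⟨T, hT, rfl⟩, rfl⟩⟩
  intro p hp
  have h1 := (hu p hp).2
  have h2 := hTs p hp
  change p.2 (A p.1) ∈ u p at h1
  change p.2 (T p.1) ∈ u p
  rw [h2]; exact h1

end LLaux

set_option linter.unusedSectionVars false

section LLcore

variable {H : Type*} [NormedAddCommGroup H] [InnerProductSpace ℂ H] [CompleteSpace H]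

/-- A maximal commuting set of orthogonal projections. -/
structure LLMax (B : Set (H →L[ℂ] H)) : Prop where
  proj : ∀ P ∈ B, IsStarProjection P
  comm : ∀ P ∈ B, ∀ Q ∈ B, P * Q = Q * P
  max : ∀ P, IsStarProjection P → (∀ Q ∈ B, P * Q = Q * P) → P ∈ B

theorem ll_exists_max (S : Set (H →L[ℂ] H)) (hS : ∀ P ∈ S, IsStarProjection P)
    (hc : ∀ P ∈ S, ∀ Q ∈ S, P * Q = Q * P) : ∃ B, S ⊆ B ∧ LLMax B := by
  obtain ⟨B, hSB, hB⟩ := zorn_subset_nonempty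
    {B : Set (H →L[ℂ] H) | (∀ P ∈ B, IsStarProjection P) ∧ ∀ P ∈ B, ∀ Q ∈ B, P * Q = Q * P}
    (by
      intro c hcS hch _
      refine ⟨⋃₀ c, ⟨?_, ?_⟩, fun s hs => Set.subset_sUnion_of_mem hs⟩
      · rintro P ⟨s, hs, hP⟩
        exact (hcS hs).1 P hP
      · rintro P ⟨s, hs, hP⟩ Q ⟨t, ht, hQ⟩
        rcases hch.total hs ht with h | h
        · exact (hcS ht).2 P (h hP) Q hQ
        · exact (hcS hs).2 P hP Q (h hQ)) S ⟨hS, hc⟩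
  refine ⟨B, hSB, hB.prop.1, hB.prop.2, fun P hP hPB => ?_⟩
  have h1 : insert P B ⊆ B := by
    refine hB.le_of_ge (y := insert P B) ⟨?_, ?_⟩ (Set.subset_insert P B)
    · rintro Q (rfl | hQ)
      · exact hP
      · exact hB.prop.1 Q hQ
    · rintro Q (rfl | hQ) R (rfl | hR)
      · rfl
      · exact hPB R hR
      · exact (hPB Q hQ).symm
      · exact hB.prop.2 Q hQ R hR
  exact h1 (Set.mem_insert P B)

theorem ll_symm {P : H →L[ℂ] H} (hP : IsStarProjection P) (x y : H) :
    inner ℂ (P x) y = inner ℂ x (P y) := by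
  rw [← ContinuousLinearMap.adjoint_inner_right, ← ContinuousLinearMap.star_eq_adjoint,
    hP.isSelfAdjoint.star_eq]

theorem ll_idem {P : H →L[ℂ] H} (hP : IsStarProjection P) (x : H) : P (P x) = P x := by
  have := hP.isIdempotentElem.eq
  exact congrArg (fun T : H →L[ℂ] H => T x) this

theorem ll_q {P : H →L[ℂ] H} (hP : IsStarProjection P) (x : H) :
    (inner ℂ x (P x)).re = ‖P x‖ ^ 2 := by
  rw [← ll_idem hP x, ← ll_symm hP, ll_idem hP x, inner_self_eq_norm_sq_to_K]
  norm_cast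

theorem ll_apply {P Q R : H →L[ℂ] H} (h : P * Q = R) (x : H) : P (Q x) = R x := by
  rw [← h]; rfl

/-- a star projection commutes with `starProjection` of an invariant subspace -/
theorem ll_comm_of_inv {P : H →L[ℂ] H} (hP : IsStarProjection P) (K : Submodule ℂ H)
    [K.HasOrthogonalProjection] (h : ∀ x ∈ K, P x ∈ K) :
    K.starProjection * P = P * K.starProjection := by
  ext x
  change K.starProjection (P x) = P (K.starProjection x)
  refine Submodule.eq_starProjection_of_mem_of_inner_eq_zero
    (h _ (Submodule.starProjection_apply_mem K x)) ?_
  intro w hw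
  rw [← map_sub, ll_symm hP]
  exact Submodule.starProjection_inner_eq_zero x _ (h w hw)

namespace LLMax

variable {B : Set (H →L[ℂ] H)}

theorem mul_mem (hB : LLMax B) {P Q : H →L[ℂ] H} (hP : P ∈ B) (hQ : Q ∈ B) : P * Q ∈ B := by
  refine hB.max _ ⟨?_, ?_⟩ ?_
  · change P * Q * (P * Q) = P * Q
    rw [mul_assoc, ← mul_assoc Q, hB.comm Q hQ P hP, mul_assoc P Q Q,
      (hB.proj Q hQ).isIdempotentElem.eq, ← mul_assoc, (hB.proj P hP).isIdempotentElem.eq]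
  · change star (P * Q) = P * Q
    rw [star_mul, (hB.proj P hP).isSelfAdjoint.star_eq, (hB.proj Q hQ).isSelfAdjoint.star_eq,
      hB.comm P hP Q hQ]
  · intro R hR
    rw [mul_assoc, hB.comm Q hQ R hR, ← mul_assoc, hB.comm P hP R hR, mul_assoc]

theorem compl_mem (hB : LLMax B) {P : H →L[ℂ] H} (hP : P ∈ B) : 1 - P ∈ B := by
  refine hB.max _ (hB.proj P hP).one_sub ?_
  intro R hR
  rw [sub_mul, mul_sub, one_mul, mul_one, hB.comm P hP R hR]

theorem one_mem (hB : LLMax B) : (1 : H →L[ℂ] H) ∈ B :=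
  hB.max _ (IsStarProjection.one _) (by simp)

theorem zero_mem (hB : LLMax B) : (0 : H →L[ℂ] H) ∈ B :=
  hB.max _ (IsStarProjection.zero _) (by simp)

theorem idem (hB : LLMax B) {P : H →L[ℂ] H} (hP : P ∈ B) : P * P = P :=
  (hB.proj P hP).isIdempotentElem.eq

theorem add_mem (hB : LLMax B) {P Q : H →L[ℂ] H} (hP : P ∈ B) (hQ : Q ∈ B) (h : P * Q = 0) :
    P + Q ∈ B := by
  have : P + Q = 1 - (1 - P) * (1 - Q) := by
    rw [sub_mul, mul_sub, one_mul, one_mul, mul_sub, mul_one, h]; abel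
  rw [this]
  exact hB.compl_mem (hB.mul_mem (hB.compl_mem hP) (hB.compl_mem hQ))

/-- A copy of the subtype of `c` without its inherited order. -/
def Idx {α : Type*} (c : Set α) : Type _ := c

/-- An exhaustion principle. -/
theorem exhaust (hB : LLMax B) (S : Set (H →L[ℂ] H)) (hSB : S ⊆ B) (h0 : 0 ∈ S)
    (hcl : ∀ P ∈ B, ∀ l : Filter (H →L[ℂ] H), l.NeBot → (∀ᶠ Q in l, Q ∈ S) →
      (∀ x, Tendsto (fun Q : H →L[ℂ] H => Q x) l (𝓝 (P x))) → P ∈ S) :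
    ∃ M ∈ S, ∀ R ∈ S, R * M = M → R = M := by
  have hz := exists_maximal_of_chains_bounded (α := S)
    (r := fun P Q => (Q : H →L[ℂ] H) * (P : H →L[ℂ] H) = P) ?_ ?_
  · obtain ⟨⟨M, hM⟩, hmax⟩ := hz
    refine ⟨M, hM, fun R hR hRM => ?_⟩
    have h1 := hmax ⟨R, hR⟩ hRM
    change M * R = R at h1
    rw [← h1, hB.comm M (hSB hM) R (hSB hR), hRM]
  · intro c hc
    rcases c.eq_empty_or_nonempty with rfl | hne
    · exact ⟨⟨0, h0⟩, by simp⟩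
    let _ : Preorder (Idx c) :=
      { le := fun P Q => (Q.1.1 : H →L[ℂ] H) * P.1.1 = P.1.1
        le_refl := fun P => hB.idem (hSB P.1.2)
        le_trans := by
          intro P Q R h1 h2
          change R.1.1 * P.1.1 = P.1.1
          rw [← (h1 : Q.1.1 * P.1.1 = P.1.1), ← mul_assoc, (h2 : R.1.1 * Q.1.1 = Q.1.1)] }
    have : Nonempty (Idx c) := hne.to_subtype
    have : IsDirectedOrder (Idx c) := ⟨by
      intro P Q
      have hr : ∀ P : Idx c, P ≤ P := le_refl
      rcases eq_or_ne P.1 Q.1 with h | h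
      · exact ⟨P, hr P, by rw [show Q = P from Subtype.ext h.symm]⟩
      · rcases hc P.2 Q.2 h with h' | h'
        · exact ⟨Q, h', hr Q⟩
        · exact ⟨P, hr P, h'⟩⟩
    have hex : ∀ P : Idx c, ∃ (K : Submodule ℂ H) (_ : K.HasOrthogonalProjection),
        P.1.1 = K.starProjection := fun P =>
      isStarProjection_iff_eq_starProjection.1 (hB.proj _ (hSB P.1.2))
    choose U hU hPU using hex
    have hmono : Monotone U := by
      intro P Q hPQ x hx
      have h1 : Q.1.1 * P.1.1 = P.1.1 := hPQ
      have h2 : P.1.1 x = x := by rw [hPU]; exact Submodule.starProjection_eq_self_iff.2 hx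
      have h3 := ll_apply h1 x
      rw [h2, hPU Q] at h3
      exact Submodule.starProjection_eq_self_iff.1 h3
    have hK : IsClosed ((⨆ i, U i).topologicalClosure : Set H) :=
      Submodule.isClosed_topologicalClosure _
    have : CompleteSpace (⨆ i, U i).topologicalClosure := hK.completeSpace_coe
    set T := (⨆ i, U i).topologicalClosure.starProjection with hT
    have hlim : ∀ x, Tendsto (fun P : Idx c => P.1.1 x) atTop (𝓝 (T x)) := by
      intro x
      have := Submodule.starProjection_tendsto_closure_iSup U hmono x
      simpa only [hPU] using this
    have hTB : T ∈ B := by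
      refine hB.max _ isStarProjection_starProjection ?_
      intro Q hQ
      ext x
      refine tendsto_nhds_unique (hlim (Q x)) ?_
      have h1 := ((Q.continuous.tendsto _).comp (hlim x))
      refine h1.congr fun P => ?_
      exact ll_apply (hB.comm Q hQ P.1.1 (hSB P.1.2)) x
    have hTS : T ∈ S := by
      refine hcl T hTB (map (fun P : Idx c => P.1.1) atTop) inferInstance ?_ ?_
      · exact Filter.eventually_map.2 (Eventually.of_forall fun P => P.1.2)
      · intro x
        exact tendsto_map'_iff.2 (hlim x)
    refine ⟨⟨T, hTS⟩, fun P hP => ?_⟩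
    ext x
    change T (P.1 x) = P.1 x
    refine Submodule.starProjection_eq_self_iff.2 ?_
    let i : Idx c := ⟨P, hP⟩
    have h1 : P.1 x ∈ U i := by
      have h2 : P.1 = _ := hPU i
      rw [h2]
      exact @Submodule.starProjection_apply_mem _ _ _ _ _ (U i) _ x
    exact Submodule.le_topologicalClosure _ (Submodule.mem_iSup_of_mem _ h1)
  · intro P Q R h1 h2
    rw [← h1, ← mul_assoc, h2]

end LLMax

/-- The cyclic subspace generated by `ξ`. -/
def llCyc (B : Set (H →L[ℂ] H)) (ξ : H) : Submodule ℂ H :=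
  (Submodule.span ℂ {z | ∃ P ∈ B, z = P ξ}).topologicalClosure

namespace LLMax

variable {B : Set (H →L[ℂ] H)}

theorem cyc_complete (B : Set (H →L[ℂ] H)) (ξ : H) : CompleteSpace (llCyc B ξ) :=
  (Submodule.isClosed_topologicalClosure _).completeSpace_coe

theorem cyc_induct {ξ : H} (K : Submodule ℂ H) (hK : IsClosed (K : Set H))
    (h : ∀ P ∈ B, P ξ ∈ K) : llCyc B ξ ≤ K := by
  refine Submodule.topologicalClosure_minimal _ (Submodule.span_le.2 ?_) hK
  rintro _ ⟨P, hP, rfl⟩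
  exact h P hP

theorem mem_cyc {ξ : H} {P : H →L[ℂ] H} (hP : P ∈ B) : P ξ ∈ llCyc B ξ :=
  Submodule.le_topologicalClosure _ (Submodule.subset_span ⟨P, hP, rfl⟩)

theorem cyc_inv (hB : LLMax B) {ξ : H} {P : H →L[ℂ] H} (hP : P ∈ B) {x : H}
    (hx : x ∈ llCyc B ξ) : P x ∈ llCyc B ξ := by
  have := cyc_induct (B := B) (ξ := ξ) ((llCyc B ξ).comap (P : H →ₗ[ℂ] H))
    ((Submodule.isClosed_topologicalClosure _).preimage P.continuous) ?_
  · exact this hx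
  · intro Q hQ
    exact mem_cyc (hB.mul_mem hP hQ)

theorem cyc_proj (hB : LLMax B) (ξ : H) : ∃ C ∈ B, (∀ x, C x ∈ llCyc B ξ) ∧
    ∀ x ∈ llCyc B ξ, C x = x := by
  have := cyc_complete B ξ
  refine ⟨(llCyc B ξ).starProjection, hB.max _ isStarProjection_starProjection ?_,
    Submodule.starProjection_apply_mem _, fun x hx => Submodule.starProjection_eq_self_iff.2 hx⟩
  intro Q hQ
  exact ll_comm_of_inv (hB.proj Q hQ) _ (fun x hx => hB.cyc_inv hQ hx)

theorem self_mem_cyc (hB : LLMax B) (ξ : H) : ξ ∈ llCyc B ξ := mem_cyc hB.one_mem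

theorem cyc_zero (hB : LLMax B) {ξ x : H} (hx : x ∈ llCyc B ξ) {Q : H →L[ℂ] H} (hQ : Q ∈ B)
    (h : Q ξ = 0) : Q x = 0 := by
  have := cyc_induct (B := B) (ξ := ξ) (LinearMap.ker (Q : H →ₗ[ℂ] H))
    (isClosed_singleton.preimage Q.continuous) ?_ 
  · exact this hx
  · intro P hP
    change Q (P ξ) = 0
    rw [ll_apply (hB.comm Q hQ P hP) ξ]
    change P (Q ξ) = 0
    rw [h, map_zero]

theorem exists_cyc (hB : LLMax B) {ι : Type*} (s : Finset ι) (x : ι → H) :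
    ∃ ξ, ∀ i ∈ s, x i ∈ llCyc B ξ := by
  classical
  induction s using Finset.induction_on with
  | empty => exact ⟨0, by simp⟩
  | insert a s _ ih =>
    obtain ⟨ξ, hξ⟩ := ih
    obtain ⟨C, hC, hCm, hCs⟩ := hB.cyc_proj ξ
    set ξ' := ξ + (x a - C (x a)) with hξ'
    have h1 : C ξ' = ξ := by
      rw [hξ', map_add, map_sub, hCs ξ (hB.self_mem_cyc ξ), hCs _ (hCm _)]; simp
    have hle : llCyc B ξ ≤ llCyc B ξ' := by
      refine cyc_induct _ (Submodule.isClosed_topologicalClosure _) fun P hP => ?_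
      have h2 : ξ ∈ llCyc B ξ' := by rw [← h1]; exact mem_cyc hC
      exact hB.cyc_inv hP h2
    refine ⟨ξ', fun i hi => ?_⟩
    rcases Finset.mem_insert.1 hi with rfl | hi
    · have h3 : x i = ξ' - C ξ' + C (x i) := by rw [h1, hξ']; abel
      rw [h3]
      exact Submodule.add_mem _ (Submodule.sub_mem _ (hB.self_mem_cyc _) (mem_cyc hC)) (hle (hCm _))
    · exact hle (hξ i hi)

/-- simple functions are locally constant -/
theorem local_const (hB : LLMax B) {ξ s : H} (hs : s ∈ Submodule.span ℂ {z | ∃ P ∈ B, z = P ξ})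
    (φ : (H →L[ℂ] H) → ℝ) (hφ : ∀ P Q, φ (P + Q) = φ P + φ Q) :
    ∀ Q₀ ∈ B, φ Q₀ < 0 → ∃ Q ∈ B, Q₀ * Q = Q ∧ φ Q < 0 ∧ ∃ v : ℂ, Q s = v • Q ξ := by
  induction hs using Submodule.span_induction with
  | mem z hz =>
    obtain ⟨P, hP, rfl⟩ := hz
    intro Q₀ hQ₀ hneg
    have h1 : φ Q₀ = φ (Q₀ * P) + φ (Q₀ * (1 - P)) := by
      rw [← hφ, ← mul_add]; simp
    rcases lt_or_ge (φ (Q₀ * P)) 0 with h | h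
    · refine ⟨Q₀ * P, hB.mul_mem hQ₀ hP, ?_, h, 1, ?_⟩
      · rw [← mul_assoc, hB.idem hQ₀]
      · rw [one_smul]
        exact congrArg Q₀ (ll_idem (hB.proj P hP) ξ)
    · refine ⟨Q₀ * (1 - P), hB.mul_mem hQ₀ (hB.compl_mem hP), ?_, by linarith, 0, ?_⟩
      · rw [← mul_assoc, hB.idem hQ₀]
      · rw [zero_smul]
        change Q₀ (P ξ - P (P ξ)) = 0
        rw [ll_idem (hB.proj P hP) ξ]; simp
  | zero => exact fun Q₀ hQ₀ h => ⟨Q₀, hQ₀, hB.idem hQ₀, h, 0, by simp⟩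
  | add a b _ _ iha ihb =>
    intro Q₀ hQ₀ hneg
    obtain ⟨Q, hQ, hQ0, hn, v, hv⟩ := iha Q₀ hQ₀ hneg
    obtain ⟨R, hR, hRQ, hn', w, hw⟩ := ihb Q hQ hn
    refine ⟨R, hR, by rw [← hRQ, ← mul_assoc, hQ0], hn', v + w, ?_⟩
    have h1 : R a = v • R ξ := by
      have hc : R * Q = R := by rw [hB.comm R hR Q hQ, hRQ]
      rw [← ll_apply hc a, hv, map_smul, ll_apply hc]
    rw [map_add, h1, hw, add_smul]
  | smul c a _ iha =>
    intro Q₀ hQ₀ hneg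
    obtain ⟨Q, hQ, hQ0, hn, v, hv⟩ := iha Q₀ hQ₀ hneg
    exact ⟨Q, hQ, hQ0, hn, c * v, by rw [map_smul, hv, smul_smul]⟩

theorem approx_one (hB : LLMax B) {ξ x : H} (hx : x ∈ llCyc B ξ) {ε : ℝ} (hε : 0 < ε)
    {Q₀ : H →L[ℂ] H} (hQ₀ : Q₀ ∈ B) (hne : Q₀ ξ ≠ 0) :
    ∃ Q₁ ∈ B, Q₀ * Q₁ = Q₁ ∧ Q₁ ξ ≠ 0 ∧ ∃ v : ℂ, ∀ Q ∈ B, Q₁ * Q = Q →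
      ‖Q (x - v • ξ)‖ ≤ ε * ‖Q ξ‖ := by
  -- choose a simple vector
  have hpos : 0 < ε * ‖Q₀ ξ‖ := mul_pos hε (norm_pos_iff.2 hne)
  obtain ⟨s, hs, hxs⟩ := Metric.mem_closure_iff.1 
    (show x ∈ closure ((Submodule.span ℂ {z | ∃ P ∈ B, z = P ξ} : Submodule ℂ H) : Set H) from hx)
    (ε * ‖Q₀ ξ‖) hpos
  rw [dist_eq_norm] at hxs
  have hφform : ∀ z : H, ∀ Q ∈ B,
      (inner ℂ z (Q z)).re - ε ^ 2 * (inner ℂ ξ (Q ξ)).re = ‖Q z‖ ^ 2 - (ε * ‖Q ξ‖) ^ 2 := by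
    intro z Q hQ
    rw [ll_q (hB.proj Q hQ), ll_q (hB.proj Q hQ)]; ring
  have hφadd : ∀ z : H, ∀ P Q : H →L[ℂ] H,
      (inner ℂ z ((P + Q) z)).re - ε ^ 2 * (inner ℂ ξ ((P + Q) ξ)).re =
      ((inner ℂ z (P z)).re - ε ^ 2 * (inner ℂ ξ (P ξ)).re) +
      ((inner ℂ z (Q z)).re - ε ^ 2 * (inner ℂ ξ (Q ξ)).re) := by
    intro z P Q
    simp only [add_apply, inner_add_right, Complex.add_re]; ring
  have hcontr : ∀ Q ∈ B, ∀ z, ‖Q z‖ ≤ ‖z‖ := by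
    intro Q hQ z
    have h1 := ll_q (hB.proj Q hQ) z
    have h2 : (inner ℂ z (Q z)).re ≤ ‖z‖ * ‖Q z‖ :=
      (Complex.re_le_norm _).trans (norm_inner_le_norm _ _)
    rw [h1] at h2
    by_contra hcon
    push Not at hcon
    nlinarith [norm_nonneg z, norm_nonneg (Q z)]
  obtain ⟨Q₂, hQ₂, hQ₂0, hneg, v, hv⟩ := hB.local_const hs
    (fun Q => (inner ℂ (x - s) (Q (x - s))).re - ε ^ 2 * (inner ℂ ξ (Q ξ)).re)
    (hφadd (x - s)) Q₀ hQ₀ (by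
      rw [hφform _ _ hQ₀]
      have := (hcontr Q₀ hQ₀ (x - s)).trans_lt hxs
      nlinarith [norm_nonneg (Q₀ (x - s))])
  set z := x - v • ξ with hz
  have hQ₂z : Q₂ z = Q₂ (x - s) := by rw [hz, map_sub, map_sub, map_smul, hv]
  have hneg2 : ‖Q₂ z‖ ^ 2 - (ε * ‖Q₂ ξ‖) ^ 2 < 0 := by
    rw [hQ₂z, ← hφform _ _ hQ₂]; exact hneg
  obtain ⟨M, ⟨hM, hMQ, hMφ⟩, hmax⟩ := hB.exhaust
    {Q | Q ∈ B ∧ Q₂ * Q = Q ∧ 0 ≤ (inner ℂ z (Q z)).re - ε ^ 2 * (inner ℂ ξ (Q ξ)).re}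
    (fun Q h => h.1) ⟨hB.zero_mem, by simp, by simp⟩ (by
      intro P hP l hl hS hlim
      refine ⟨hP, ?_, ?_⟩
      · ext y
        refine tendsto_nhds_unique ((Q₂.continuous.tendsto _).comp (hlim y)) ?_
        refine (hlim y).congr' ?_
        filter_upwards [hS] with Q hQ
        exact (ll_apply hQ.2.1 y).symm
      · have h1 : ∀ y : H, Tendsto (fun Q : H →L[ℂ] H => (inner ℂ y (Q y)).re) l
            (𝓝 (inner ℂ y (P y)).re) := fun y =>
          (Complex.continuous_re.tendsto _).comp (tendsto_const_nhds.inner (hlim y))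
        refine ge_of_tendsto ((h1 z).sub ((h1 ξ).const_mul (ε ^ 2))) ?_
        filter_upwards [hS] with Q hQ
        exact hQ.2.2)
  have hM2 : M * Q₂ = M := by rw [hB.comm M hM Q₂ hQ₂, hMQ]
  have hQ₁ : Q₂ - M ∈ B := by
    have : Q₂ - M = Q₂ * (1 - M) := by rw [mul_sub, mul_one, hMQ]
    rw [this]; exact hB.mul_mem hQ₂ (hB.compl_mem hM)
  refine ⟨Q₂ - M, hQ₁, ?_, ?_, v, ?_⟩
  · rw [mul_sub, hQ₂0]
    congr 1
    rw [← hMQ, ← mul_assoc, hQ₂0]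
  · intro h0
    have h1 := hφadd z M (Q₂ - M)
    rw [show M + (Q₂ - M) = Q₂ by abel, hφform _ _ hQ₂, hφform _ _ hQ₁, h0] at h1
    simp only [norm_zero, mul_zero] at h1
    nlinarith [sq_nonneg ‖(Q₂ - M) z‖]
  · intro Q hQ hQle
    by_contra hcon
    push Not at hcon
    have hMQ0 : M * Q = 0 := by
      rw [← hQle, ← mul_assoc, mul_sub, hM2, hB.idem hM]; simp
    have hQM0 : Q * M = 0 := by rw [hB.comm Q hQ M hM, hMQ0]
    have hQ2Q : Q₂ * Q = Q := by
      have := hQle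
      rw [sub_mul, hMQ0, sub_zero] at this; exact this
    have hle : Q + M = M := by
      refine hmax (Q + M) ⟨hB.add_mem hQ hM hQM0, by rw [mul_add, hQ2Q, hMQ], ?_⟩ ?_
      · rw [hφadd, hφform _ _ hQ]
        have : 0 ≤ ε * ‖Q ξ‖ := by positivity
        nlinarith
      · rw [add_mul, hQM0, hB.idem hM, zero_add]
    have hQ0 : Q = 0 := by simpa using hle
    rw [hQ0] at hcon
    simp at hcon

theorem approx_fin (hB : LLMax B) {ξ : H} {ι : Type*} (s : Finset ι) (x : ι → H)
    (hx : ∀ i ∈ s, x i ∈ llCyc B ξ) {ε : ℝ} (hε : 0 < ε)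
    {Q₀ : H →L[ℂ] H} (hQ₀ : Q₀ ∈ B) (hne : Q₀ ξ ≠ 0) :
    ∃ Q₁ ∈ B, Q₀ * Q₁ = Q₁ ∧ Q₁ ξ ≠ 0 ∧ ∃ v : ι → ℂ, ∀ i ∈ s, ∀ Q ∈ B, Q₁ * Q = Q →
      ‖Q (x i - v i • ξ)‖ ≤ ε * ‖Q ξ‖ := by
  classical
  induction s using Finset.induction_on with
  | empty => exact ⟨Q₀, hQ₀, hB.idem hQ₀, hne, 0, by simp⟩
  | insert a s ha ih =>
    obtain ⟨Q₁, hQ₁, h01, hne1, v, hv⟩ := ih (fun i hi => hx i (Finset.mem_insert_of_mem hi))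
    obtain ⟨Q₂, hQ₂, h12, hne2, w, hw⟩ :=
      hB.approx_one (hx a (Finset.mem_insert_self _ _)) hε hQ₁ hne1
    refine ⟨Q₂, hQ₂, by rw [← h12, ← mul_assoc, h01], hne2, Function.update v a w, ?_⟩
    intro i hi Q hQ hQle
    rcases Finset.mem_insert.1 hi with rfl | hi
    · simpa using hw Q hQ hQle
    · have : i ≠ a := fun h => ha (h ▸ hi)
      rw [Function.update_of_ne this]
      refine hv i hi Q hQ ?_
      rw [← hQle, ← mul_assoc, h12]

end LLMax

end LLcore

section LLfinal

variable {H : Type*} [NormedAddCommGroup H] [InnerProductSpace ℂ H] [CompleteSpace H]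

theorem ll_projOf {E : Submodule ℂ H} (hE : IsClosed (E : Set H)) :
    IsStarProjection (projOf E) ∧ (∀ x, projOf E x ∈ E) ∧ ∀ x, x ∈ E ↔ projOf E x = x := by
  have : CompleteSpace E := hE.completeSpace_coe
  have h : projOf E = E.starProjection := by
    rw [projOf, dif_pos hE]; rfl
  rw [h]
  exact ⟨isStarProjection_starProjection, Submodule.starProjection_apply_mem _,
    fun x => Submodule.starProjection_eq_self_iff.symm⟩

theorem ll_local [TopologicalSpace.SeparableSpace H] {L : Set (Submodule ℂ H)}
    (hL : IsSubspaceLattice L) (hcd : IsCompletelyDistributive L)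
    {B : Set (H →L[ℂ] H)} (hB : LLMax B) (hLB : ∀ E ∈ L, projOf E ∈ B)
    {ι : Type*} (s : Finset ι) (x y : ι → H)
    (hxy : ∀ N ∈ L, ∀ h ∈ N, ∑ i ∈ s, inner ℂ (x i) h • y i ∈ minus L N)
    {ξ : H} (hx : ∀ i ∈ s, x i ∈ llCyc B ξ) {ε : ℝ} (hε : 0 < ε)
    {Q₀ : H →L[ℂ] H} (hQ₀ : Q₀ ∈ B) (hne : Q₀ ≠ 0) :
    ∃ R ∈ B, Q₀ * R = R ∧ R ≠ 0 ∧
      ‖∑ i ∈ s, inner ℂ (x i) (R (y i))‖ ≤ ε * ∑ i ∈ s, (‖R ξ‖ ^ 2 + ‖R (y i)‖ ^ 2) := by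
  by_cases h0 : Q₀ ξ = 0
  · refine ⟨Q₀, hQ₀, hB.idem hQ₀, hne, ?_⟩
    have : ∑ i ∈ s, inner ℂ (x i) (Q₀ (y i)) = 0 := by
      refine Finset.sum_eq_zero fun i hi => ?_
      rw [← ll_symm (hB.proj _ hQ₀), hB.cyc_zero (hx i hi) hQ₀ h0, inner_zero_left]
    rw [this, norm_zero]
    positivity
  obtain ⟨C, hC, hCm, hCs⟩ := hB.cyc_proj ξ
  have hCξ : C ξ = ξ := hCs ξ (hB.self_mem_cyc ξ)
  obtain ⟨Q₁', hQ₁', h01, hne1, v, hv⟩ := hB.approx_fin s x hx hε hQ₀ h0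
  -- cut down to the cyclic part
  obtain ⟨Q₁, hQ₁e⟩ : ∃ Q₁, Q₁ = Q₁' * C := ⟨_, rfl⟩
  have hQ₁ : Q₁ ∈ B := hQ₁e ▸ hB.mul_mem hQ₁' hC
  have hQ₁C : Q₁ * C = Q₁ := by rw [hQ₁e, mul_assoc, hB.idem hC]
  have h11 : Q₁' * Q₁ = Q₁ := by rw [hQ₁e, ← mul_assoc, hB.idem hQ₁']
  have h01' : Q₀ * Q₁ = Q₁ := by rw [← h11, ← mul_assoc, h01]
  have hne1' : Q₁ ξ ≠ 0 := by
    rw [hQ₁e]; change Q₁' (C ξ) ≠ 0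
    rw [hCξ]; exact hne1
  -- the largest member of `L` orthogonal to `Q₁`
  obtain ⟨E, hEe⟩ : ∃ E, E = closedJoin {K | K ∈ L ∧ ∀ z ∈ K, Q₁ z = 0} := ⟨_, rfl⟩
  have hEL : E ∈ L := hEe ▸ hL.join_mem _ (fun _ h => h.1)
  have hEker : ∀ z ∈ E, Q₁ z = 0 := by
    have : E ≤ LinearMap.ker (Q₁ : H →ₗ[ℂ] H) := by
      rw [hEe]
      exact ll_closedJoin_le (isClosed_singleton.preimage Q₁.continuous) (fun K hK z hz => hK.2 z hz)
    exact fun z hz => this hz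
  obtain ⟨N, hNL, hNE, hNm⟩ : ∃ N ∈ L, ¬ N ≤ E ∧ Q₁ ξ ∉ minus L N := by
    by_contra hcon
    push Not at hcon
    have h1 := hEker _ (ll_cd hL hcd hEL (Q₁ ξ) hcon)
    rw [ll_idem (hB.proj _ hQ₁)] at h1
    exact hne1' h1
  have hmL := ll_minus_mem hL N
  obtain ⟨-, hPNm, hPNs⟩ := ll_projOf (hL.isClosed N hNL)
  obtain ⟨-, hPmm, hPms⟩ := ll_projOf (hL.isClosed _ hmL)
  have hPN := hLB N hNL
  have hPm := hLB _ hmL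
  generalize projOf N = PN at *
  generalize projOf (minus L N) = Pm at *
  obtain ⟨Q', hQ'e⟩ : ∃ Q', Q' = PN * Q₁ := ⟨_, rfl⟩
  have hQ' : Q' ∈ B := hQ'e ▸ hB.mul_mem hPN hQ₁
  have hQ'ξ : Q' ξ ≠ 0 := by
    intro h
    apply hNE
    rw [hEe]
    refine ll_le_closedJoin ⟨hNL, fun z hz => ?_⟩
    have h1 := hB.cyc_zero (hCm z) hQ' h
    have h2 : Q' (C z) = Q₁ z := by
      have h3 : Q' * C = Q₁ * PN := by
        rw [hQ'e, mul_assoc, hQ₁C, hB.comm _ hPN _ hQ₁]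
      rw [ll_apply h3]
      change Q₁ (PN z) = _
      rw [(hPNs z).1 hz]
    rw [← h2, h1]
  have h1Q' : Q₁' * Q' = Q' := by
    rw [hQ'e, ← mul_assoc, hB.comm _ hQ₁' _ hPN, mul_assoc, h11]
  obtain ⟨R, hRe⟩ : ∃ R, R = Q₁ * (1 - Pm) := ⟨_, rfl⟩
  have hR : R ∈ B := hRe ▸ hB.mul_mem hQ₁ (hB.compl_mem hPm)
  have h1R : Q₁' * R = R := by rw [hRe, ← mul_assoc, h11]
  refine ⟨R, hR, by rw [hRe, ← mul_assoc, h01'], ?_, ?_⟩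
  · intro hR0
    apply hNm
    rw [hPms]
    have h1 : R ξ = 0 := by rw [hR0]; rfl
    rw [hRe] at h1
    have h2 : Q₁ ξ - Q₁ (Pm ξ) = 0 := by rw [← map_sub]; exact h1
    rw [ll_apply (hB.comm _ hQ₁ _ hPm) ξ] at h2
    exact (sub_eq_zero.1 h2).symm
  -- the estimate
  have hpos : 0 < ‖Q' ξ‖ := norm_pos_iff.2 hQ'ξ
  have hc : (inner ℂ (Q' ξ) (Q' ξ) : ℂ) ≠ 0 := inner_self_ne_zero.2 hQ'ξ
  obtain ⟨w, hw⟩ : ∃ w : ι → ℂ, ∀ i, w i = inner ℂ (Q' ξ) (x i) / inner ℂ (Q' ξ) (Q' ξ) :=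
    ⟨_, fun i => rfl⟩
  have hwv : ∀ i ∈ s, ‖w i - v i‖ ≤ ε := by
    intro i hi
    have h1 : w i - v i = inner ℂ (Q' ξ) (Q' (x i - v i • ξ)) / inner ℂ (Q' ξ) (Q' ξ) := by
      rw [hw, eq_div_iff hc, sub_mul, div_mul_cancel₀ _ hc, map_sub, map_smul, inner_sub_right,
        inner_smul_right, ← ll_symm (hB.proj _ hQ') (Q' ξ) (x i), ll_idem (hB.proj _ hQ')]
    have h2 : ‖(inner ℂ (Q' ξ) (Q' ξ) : ℂ)‖ = ‖Q' ξ‖ * ‖Q' ξ‖ := by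
      rw [inner_self_eq_norm_sq_to_K]; simp [sq]
    rw [h1, norm_div, h2, div_le_iff₀ (by positivity)]
    calc _ ≤ ‖Q' ξ‖ * ‖Q' (x i - v i • ξ)‖ := norm_inner_le_norm _ _
      _ ≤ ‖Q' ξ‖ * (ε * ‖Q' ξ‖) := by gcongr; exact hv i hi Q' hQ' h1Q'
      _ = _ := by ring
  have hsum : ∑ i ∈ s, (starRingEnd ℂ (w i)) • R (y i) = 0 := by
    have hmem : Q' ξ ∈ N := by rw [hQ'e]; exact hPNm _
    have h1 := (hPms _).1 (hxy N hNL _ hmem)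
    have h2 : R (∑ i ∈ s, inner ℂ (x i) (Q' ξ) • y i) = 0 := by
      rw [hRe]
      change Q₁ ((∑ i ∈ s, inner ℂ (x i) (Q' ξ) • y i) -
        Pm (∑ i ∈ s, inner ℂ (x i) (Q' ξ) • y i)) = 0
      rw [h1, sub_self, map_zero]
    rw [map_sum] at h2
    have h3 : ∑ i ∈ s, (starRingEnd ℂ (w i)) • R (y i) =
        (starRingEnd ℂ (inner ℂ (Q' ξ) (Q' ξ)))⁻¹ • ∑ i ∈ s, R (inner ℂ (x i) (Q' ξ) • y i) := by
      rw [Finset.smul_sum]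
      refine Finset.sum_congr rfl fun i _ => ?_
      rw [map_smul, smul_smul, hw, map_div₀, inner_conj_symm (x i) (Q' ξ), div_eq_inv_mul]
    rw [h3, h2, smul_zero]
  have hν : ∑ i ∈ s, inner ℂ (x i) (R (y i)) =
      ∑ i ∈ s, inner ℂ (R (x i - w i • ξ)) (R (y i)) := by
    have h1 : ∑ i ∈ s, inner ℂ (w i • R ξ) (R (y i)) = 0 := by
      have : (inner ℂ (R ξ) (∑ i ∈ s, (starRingEnd ℂ (w i)) • R (y i)) : ℂ) = 0 := by
        rw [hsum, inner_zero_right]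
      rw [inner_sum] at this
      rw [← this]
      refine Finset.sum_congr rfl fun i _ => ?_
      rw [inner_smul_left, inner_smul_right]
    rw [← sub_zero (∑ i ∈ s, inner ℂ (x i) (R (y i))), ← h1, ← Finset.sum_sub_distrib]
    refine Finset.sum_congr rfl fun i _ => ?_
    rw [map_sub, map_smul, inner_sub_left, ll_symm (hB.proj _ hR) (x i), ll_idem (hB.proj _ hR)]
  rw [hν, Finset.mul_sum]
  refine (norm_sum_le _ _).trans (Finset.sum_le_sum fun i hi => ?_)
  have h1 : ‖R (x i - w i • ξ)‖ ≤ 2 * ε * ‖R ξ‖ := by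
    have h2 : R (x i - w i • ξ) = R (x i - v i • ξ) - (w i - v i) • R ξ := by
      simp only [map_sub, map_smul, sub_smul]; abel
    rw [h2]
    refine (norm_sub_le _ _).trans ?_
    rw [norm_smul]
    have h3 := hv i hi R hR h1R
    have h4 := mul_le_mul_of_nonneg_right (hwv i hi) (norm_nonneg (R ξ))
    linarith
  calc _ ≤ ‖R (x i - w i • ξ)‖ * ‖R (y i)‖ := norm_inner_le_norm _ _
    _ ≤ 2 * ε * ‖R ξ‖ * ‖R (y i)‖ := by gcongr
    _ = ε * (2 * ‖R ξ‖ * ‖R (y i)‖) := by ring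
    _ ≤ _ := by gcongr; exact two_mul_le_add_sq _ _

theorem ll_trace [TopologicalSpace.SeparableSpace H] {L : Set (Submodule ℂ H)}
    (hL : IsCSL L) (hcd : IsCompletelyDistributive L)
    {ι : Type*} (s : Finset ι) (x y : ι → H)
    (hxy : ∀ N ∈ L, ∀ h ∈ N, ∑ i ∈ s, inner ℂ (x i) h • y i ∈ minus L N) :
    ∑ i ∈ s, inner ℂ (x i) (y i) = 0 := by
  have hL' := hL.toIsSubspaceLattice
  obtain ⟨B, hSB, hB⟩ := ll_exists_max (projOf '' L)
    (by rintro _ ⟨E, hE, rfl⟩; exact (ll_projOf (hL'.isClosed E hE)).1)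
    (by rintro _ ⟨E, hE, rfl⟩ _ ⟨F, hF, rfl⟩; exact hL.commutes E hE F hF)
  have hLB : ∀ E ∈ L, projOf E ∈ B := fun E hE => hSB ⟨E, hE, rfl⟩
  obtain ⟨ξ, hξ⟩ := hB.exists_cyc s x
  have hτ : ∀ R ∈ B, ∑ i ∈ s, (‖R ξ‖ ^ 2 + ‖R (y i)‖ ^ 2) =
      ∑ i ∈ s, ((inner ℂ ξ (R ξ)).re + (inner ℂ (y i) (R (y i))).re) := by
    intro R hR
    refine Finset.sum_congr rfl fun i _ => ?_
    rw [ll_q (hB.proj R hR), ll_q (hB.proj R hR)]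
  have bound : ∀ ε : ℝ, 0 < ε → ‖∑ i ∈ s, inner ℂ (x i) (y i)‖ ≤
      ε * ∑ i ∈ s, (‖ξ‖ ^ 2 + ‖y i‖ ^ 2) := by
    intro ε hε
    obtain ⟨M, ⟨hM, hMb⟩, hmax⟩ := hB.exhaust
      {R | R ∈ B ∧ ‖∑ i ∈ s, inner ℂ (x i) (R (y i))‖ ≤
        ε * ∑ i ∈ s, (‖R ξ‖ ^ 2 + ‖R (y i)‖ ^ 2)}
      (fun R h => h.1) ⟨hB.zero_mem, by simp⟩ (by
        intro P hP l hl hS hlim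
        refine ⟨hP, ?_⟩
        refine le_of_tendsto_of_tendsto
          (f := fun R : H →L[ℂ] H => ‖∑ i ∈ s, inner ℂ (x i) (R (y i))‖)
          (g := fun R : H →L[ℂ] H => ε * ∑ i ∈ s, (‖R ξ‖ ^ 2 + ‖R (y i)‖ ^ 2)) ?_ ?_
          (hS.mono fun R hR => hR.2)
        · exact (tendsto_finsetSum _ fun i _ => tendsto_const_nhds.inner (hlim (y i))).norm
        · exact (tendsto_finsetSum _ fun i _ =>
            ((hlim ξ).norm.pow 2).add ((hlim (y i)).norm.pow 2)).const_mul ε)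
    by_cases hM1 : 1 - M = 0
    · have : M = 1 := (sub_eq_zero.1 hM1).symm
      rw [this] at hMb
      exact hMb
    obtain ⟨R, hR, hRle, hR0, hRb⟩ := ll_local hL' hcd hB hLB s x y hxy hξ hε
      (hB.compl_mem hM) hM1
    exfalso
    have hMR : M * R = 0 := by
      rw [← hRle, ← mul_assoc, mul_sub, mul_one, hB.idem hM, sub_self, zero_mul]
    have hRM : R * M = 0 := by rw [hB.comm R hR M hM, hMR]
    have hadd := hB.add_mem hR hM hRM
    apply hR0
    have h1 := hmax (R + M) ⟨hadd, ?_⟩ (by rw [add_mul, hRM, hB.idem hM, zero_add])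
    · simpa using h1
    · have h2 : ∑ i ∈ s, inner ℂ (x i) ((R + M) (y i)) =
          ∑ i ∈ s, inner ℂ (x i) (R (y i)) + ∑ i ∈ s, inner ℂ (x i) (M (y i)) := by
        simp only [add_apply, inner_add_right, Finset.sum_add_distrib]
      have h3 : ∑ i ∈ s, (‖(R + M) ξ‖ ^ 2 + ‖(R + M) (y i)‖ ^ 2) =
          ∑ i ∈ s, (‖R ξ‖ ^ 2 + ‖R (y i)‖ ^ 2) + ∑ i ∈ s, (‖M ξ‖ ^ 2 + ‖M (y i)‖ ^ 2) := by
        rw [hτ _ hadd, hτ _ hR, hτ _ hM, ← Finset.sum_add_distrib]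
        refine Finset.sum_congr rfl fun i _ => ?_
        simp only [add_apply, inner_add_right, Complex.add_re]
        ring
      rw [h2, h3, mul_add]
      exact (norm_add_le _ _).trans (add_le_add hRb hMb)
  have hlim : Tendsto (fun ε : ℝ => ε * ∑ i ∈ s, (‖ξ‖ ^ 2 + ‖y i‖ ^ 2)) (𝓝[>] 0) (𝓝 0) := by
    have : Tendsto (fun ε : ℝ => ε * ∑ i ∈ s, (‖ξ‖ ^ 2 + ‖y i‖ ^ 2)) (𝓝 0)
        (𝓝 (0 * ∑ i ∈ s, (‖ξ‖ ^ 2 + ‖y i‖ ^ 2))) := tendsto_id.mul_const _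
    rw [zero_mul] at this
    exact this.mono_left nhdsWithin_le_nhds
  have h0 : ‖∑ i ∈ s, inner ℂ (x i) (y i)‖ ≤ 0 := by
    refine ge_of_tendsto hlim ?_
    filter_upwards [self_mem_nhdsWithin] with ε hε
    exact bound ε hε
  exact norm_le_zero_iff.1 h0

end LLfinal


/-- (Laurie–Longstaff) The span of the rank one operators in `Alg L` is WOT-dense
in `Alg L`. -/
theorem stmt_19 {H : Type*} [NormedAddCommGroup H] [InnerProductSpace ℂ H]
    [CompleteSpace H] [TopologicalSpace.SeparableSpace H]
    (L : Set (Submodule ℂ H)) (hL : IsCSL L) (hcd : IsCompletelyDistributive L) :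
    ∀ A ∈ algL L,
      ContinuousLinearMapWOT.ofCLM (σ := RingHom.id ℂ) (E := H) (F := H) A ∈
        closure (ContinuousLinearMapWOT.ofCLM (σ := RingHom.id ℂ) (E := H) (F := H) ''
          (Submodule.span ℂ
            {T : H →L[ℂ] H | T ∈ algL L ∧ ∃ x f : H, x ≠ 0 ∧ f ≠ 0 ∧ T = rankOne x f} :
              Set (H →L[ℂ] H))) := by
  exact fun A hA => ll_reduce hL.toIsSubspaceLattice
    (fun s x y h => ll_trace hL hcd s x y h) A hA
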